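/- Let G be a finite group acting faithfully and transitively on a finite set Z, let α ∈ Z, and let B_α = {β ∈ Z : σ(β) = β for all σ ∈ G_α}. Let Λ be a minimal block of G with α ∈ Λ and Λ ∩ B_α = {α}. Then for every β ∈ Λ with β ≠ α, the orbit of α under the subgroup generated by G_α and G_β equals Λ. -/

import Mathlib

/-!
Let `H = ⟨G_α, G_β⟩`. Since `G_α ≤ H`, the orbit `H(α)` is a block, and since both stabilizers
preserve the block `Λ`, which contains `α` and `β`, it lies in `Λ`. By minimality it is `Λ`
or trivial. It contains `α`, and it is not `Z` because `Λ` is not, so if trivial it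
is `{α}`. Then `G_β ≤ G_α`; in a finite transitive group point stabilizers are conjugate and thus
have the same order, so `G_β = G_α` and `β ∈ Λ ∩ B_α = {α}`, contrary to `β ≠ α`.
-/

open Pointwise

/-- `B` is a block of the action of `G` on `Z`: for every `σ ∈ G`, the set `σ(B) ∩ B`
is empty or equals `B`. -/
def IsBlockOfAction (G : Type*) [Group G] {Z : Type*} [MulAction G Z] (B : Set Z) : Prop :=
  ∀ σ : G, σ • B ∩ B = ∅ ∨ σ • B ∩ B = B

/-- The trivial blocks are `∅`, `Z` and the singletons. -/
def IsTrivialBlock' {Z : Type*} (B : Set Z) : Prop :=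
  B = ∅ ∨ B = Set.univ ∨ ∃ γ : Z, B = {γ}

/-- The condition `g • B ∩ B = B` only says `B ⊆ g • B`, but imposing it for `g⁻¹` too gives
equality, so no finiteness is needed. -/
theorem isBlockOfAction_iff {G Z : Type*} [Group G] [MulAction G Z] {B : Set Z} :
    IsBlockOfAction G B ↔ MulAction.IsBlock G B := by
  rw [MulAction.isBlock_iff_smul_eq_or_disjoint]
  constructor
  · intro h g
    rcases h g with h1 | h1
    · exact Or.inr (Set.disjoint_iff_inter_eq_empty.2 h1)
    · have hsub : B ⊆ g • B := Set.inter_eq_right.1 h1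
      rcases h g⁻¹ with h2 | h2
      · have h4 : g⁻¹ • B ⊆ B :=
          Set.smul_set_subset_iff_subset_inv_smul_set.2 (by simpa using hsub)
        rw [Set.inter_eq_left.2 h4, Set.smul_set_eq_empty] at h2
        left; simp [h2]
      · have h3 : B ⊆ g⁻¹ • B := Set.inter_eq_right.1 h2
        left
        refine Set.Subset.antisymm ?_ hsub
        exact Set.smul_set_subset_iff_subset_inv_smul_set.2 h3
  · intro h g
    rcases h g with h1 | h1
    · right; rw [h1, Set.inter_self]
    · exact Or.inl (Set.disjoint_iff_inter_eq_empty.1 h1)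

theorem stabilizer_eq_of_le {G Z : Type*} [Group G] [Finite G] [MulAction G Z]
    [MulAction.IsPretransitive G Z] {α β : Z}
    (hle : MulAction.stabilizer G β ≤ MulAction.stabilizer G α) :
    MulAction.stabilizer G β = MulAction.stabilizer G α := by
  refine Subgroup.eq_of_le_of_card_ge hle (le_of_eq ?_)
  have h : MulAction.orbitRel G Z α β := MulAction.exists_smul_eq G β α
  exact Nat.card_congr (MulAction.stabilizerEquivStabilizerOfOrbitRel h).toEquiv

/-- **Proposition.** Let `G` act faithfully and transitively on a finite set `Z`,
`α ∈ Z`, and `B_α = {β : σ(β) = β for all σ ∈ G_α}`.  Let `Λ` be a minimal block of `G`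
with `α ∈ Λ` and `Λ ∩ B_α = {α}`.  Then for every `β ∈ Λ` with `β ≠ α`, the orbit of `α`
under the subgroup generated by `G_α` and `G_β` equals `Λ`. -/
theorem orbit_of_generated_stabilizers_eq_minimal_block
    {G Z : Type*} [Group G] [Finite G] [MulAction G Z] [Finite Z]
    [FaithfulSMul G Z] [MulAction.IsPretransitive G Z] (α : Z)
    (Λ : Set Z) (hblock : IsBlockOfAction G Λ) (hnontriv : ¬ IsTrivialBlock' Λ)
    (hmin : ∀ B ⊆ Λ, IsBlockOfAction G B → (IsTrivialBlock' B ∨ B = Λ))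
    (hαΛ : α ∈ Λ)
    (hcap : Λ ∩ {β : Z | ∀ σ ∈ MulAction.stabilizer G α, σ • β = β} = {α}) :
    ∀ β ∈ Λ, β ≠ α →
      {γ : Z | ∃ σ ∈ MulAction.stabilizer G α ⊔ MulAction.stabilizer G β, σ • α = γ}
        = Λ := by
  intro β hβ hne
  set H := MulAction.stabilizer G α ⊔ MulAction.stabilizer G β with hH
  set B : Set Z := {γ : Z | ∃ σ ∈ H, σ • α = γ} with hB
  have hBorbit : B = MulAction.orbit H α := by
    ext γ
    simp [hB, MulAction.mem_orbit_iff, Subgroup.smul_def]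
  have hBblock : IsBlockOfAction G B := by
    rw [isBlockOfAction_iff, hBorbit]
    exact MulAction.IsBlock.of_orbit le_sup_left
  have hαB : α ∈ B := ⟨1, H.one_mem, one_smul G α⟩
  have hΛ := isBlockOfAction_iff.1 hblock
  have hHΛ : H ≤ MulAction.stabilizer G Λ :=
    sup_le (hΛ.stabilizer_le hαΛ) (hΛ.stabilizer_le hβ)
  have hBΛ : B ⊆ Λ := by
    rintro γ ⟨σ, hσ, rfl⟩
    have h := Set.smul_mem_smul_set (a := σ) hαΛ
    rwa [MulAction.mem_stabilizer_iff.1 (hHΛ hσ)] at h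
  rcases hmin B hBΛ hBblock with (h | h | ⟨γ, h⟩) | h
  · exact absurd (h ▸ hαB) (Set.notMem_empty α)
  · exact absurd (Or.inr (Or.inl (Set.univ_subset_iff.1 (h ▸ hBΛ)))) hnontriv
  -- If `B` is a singleton, then `G_β` fixes `α`, so `G_β = G_α` and `β ∈ Λ ∩ B_α = {α}`.
  · have hle : MulAction.stabilizer G β ≤ MulAction.stabilizer G α := by
      intro σ hσ
      have h1 : σ • α ∈ B := ⟨σ, Subgroup.mem_sup_right hσ, rfl⟩
      rw [h, Set.mem_singleton_iff] at h1 hαB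
      exact h1.trans hαB.symm
    have heq := stabilizer_eq_of_le hle
    have hβcap : β ∈ Λ ∩ {β : Z | ∀ σ ∈ MulAction.stabilizer G α, σ • β = β} :=
      ⟨hβ, fun σ hσ => MulAction.mem_stabilizer_iff.1 (heq ▸ hσ)⟩
    rw [hcap] at hβcap
    exact absurd hβcap hne
  · exact h
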